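/- Fix 1 ≤ p < ∞, m ∈ ℕ, n ∈ ℤ, and a non-quasianalytic weight function ω with Young conjugate φ*. The space O^m_{n,ω,p}(ℝ^N) of smooth functions f with r_{m,n,p}(f)^p := Σ_{α ∈ ℕ₀^N} ‖e^{−nω} ∂^α f‖_p^p · exp(−mp φ*(|α|/m)) < ∞ is a Banach space under the norm r_{m,n,p}. -/

import Mathlib

open MeasureTheory Real ENNReal Filter

noncomputable section

abbrev Euc (N : ℕ) := EuclideanSpace ℝ (Fin N)

/-- First-order partial derivative in direction `i`. -/
def pd {N : ℕ} (i : Fin N) (f : Euc N → ℂ) : Euc N → ℂ :=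
  fun x => fderiv ℝ f x (EuclideanSpace.single i (1:ℝ))

def pdPow {N : ℕ} (i : Fin N) : ℕ → (Euc N → ℂ) → (Euc N → ℂ)
  | 0, f => f
  | n+1, f => pd i (pdPow i n f)

/-- Multi-index partial derivative `∂^α f`. -/
def mderiv {N : ℕ} (α : Fin N → ℕ) (f : Euc N → ℂ) : Euc N → ℂ :=
  (List.finRange N).foldr (fun i g => pdPow i (α i) g) f

/-- Length `|α|` of a multi-index. -/
def msize {N : ℕ} (α : Fin N → ℕ) : ℕ := ∑ i, α i

/-- Weighted `L^p` norm `‖e^{w} g‖_p` (value in `ℝ≥0∞`). -/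
def wLp {N : ℕ} (p : ℝ≥0∞) (w : Euc N → ℝ) (g : Euc N → ℂ) : ℝ≥0∞ :=
  eLpNorm (fun x => Real.exp (w x) * ‖g x‖) p volume

def youngConj (φ : ℝ → ℝ) (s : ℝ) : ℝ :=
  sSup {y | ∃ t ≥ 0, y = s * t - φ t}

/-- Young conjugate `φ*` of `φ_ω = ω ∘ exp`. -/
def phiStar (ω : ℝ → ℝ) (s : ℝ) : ℝ :=
  youngConj (fun t => ω (Real.exp t)) s

/-- A non-quasianalytic weight function in the sense of Braun–Meise–Taylor. -/
structure IsWeightFun (ω : ℝ → ℝ) : Prop where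
  continuous : ContinuousOn ω (Set.Ici 0)
  mono : MonotoneOn ω (Set.Ici 0)
  nonneg : ∀ t, 0 ≤ t → 0 ≤ ω t
  alpha : ∃ K ≥ 1, ∀ t ≥ 0, ω (2*t) ≤ K * (1 + ω t)
  beta : IntegrableOn (fun t => ω t / (1 + t^2)) (Set.Ici 1)
  gamma : ∃ a b : ℝ, 0 < b ∧ ∀ t ≥ 0, a + b * Real.log (1+t) ≤ ω t
  delta : ConvexOn ℝ (Set.Ici 0) (fun t => ω (Real.exp t))
  vanish : ∀ t ∈ Set.Icc (0:ℝ) 1, ω t = 0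

/-- The norm `r_{m,n,p}` of the space `O^m_{n,ω,p}(ℝ^N)`. -/
def rnorm {N : ℕ} (ω : ℝ → ℝ) (m : ℕ) (n : ℤ) (p : ℝ) (f : Euc N → ℂ) : ℝ≥0∞ :=
  (∑' α : Fin N → ℕ,
    (wLp (ENNReal.ofReal p) (fun x => -((n : ℝ) * ω ‖x‖)) (mderiv α f)) ^ p *
      ENNReal.ofReal (Real.exp (-((m : ℝ) * p * phiStar ω ((msize α : ℝ) / m))))) ^ (1/p)

open scoped Topology

lemma pd_smooth {N : ℕ} (i : Fin N) {f : Euc N → ℂ} (hf : ContDiff ℝ (⊤ : ℕ∞) f) :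
    ContDiff ℝ (⊤ : ℕ∞) (pd i f) := by
  unfold pd
  have h : ContDiff ℝ (⊤ : ℕ∞) (fderiv ℝ f) := hf.fderiv_right (by simp)
  exact h.clm_apply contDiff_const

lemma pdPow_smooth {N : ℕ} (i : Fin N) (k : ℕ) {f : Euc N → ℂ} (hf : ContDiff ℝ (⊤ : ℕ∞) f) :
    ContDiff ℝ (⊤ : ℕ∞) (pdPow i k f) := by
  induction k with
  | zero => exact hf
  | succ k ih => exact pd_smooth i ih

lemma foldr_smooth {N : ℕ} (L : List (Fin N)) (α : Fin N → ℕ) {f : Euc N → ℂ}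
    (hf : ContDiff ℝ (⊤ : ℕ∞) f) :
    ContDiff ℝ (⊤ : ℕ∞) (L.foldr (fun i g => pdPow i (α i) g) f) := by
  induction L with
  | nil => exact hf
  | cons j L ih => exact pdPow_smooth j _ ih

lemma mderiv_smooth {N : ℕ} (α : Fin N → ℕ) {f : Euc N → ℂ}
    (hf : ContDiff ℝ (⊤ : ℕ∞) f) : ContDiff ℝ (⊤ : ℕ∞) (mderiv α f) :=
  foldr_smooth _ α hf

lemma pd_comm {N : ℕ} (i j : Fin N) {f : Euc N → ℂ} (hf : ContDiff ℝ (⊤ : ℕ∞) f) :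
    pd i (pd j f) = pd j (pd i f) := by
  funext x
  have h : ContDiff ℝ (⊤ : ℕ∞) (fderiv ℝ f) := hf.fderiv_right (by simp)
  have hd : DifferentiableAt ℝ (fderiv ℝ f) x := (h.differentiable (by simp)) x
  have hs : IsSymmSndFDerivAt ℝ f x := by
    apply (hf.contDiffAt).isSymmSndFDerivAt
    rw [minSmoothness_of_isRCLikeNormedField]
    exact WithTop.coe_le_coe.2 (le_top : (2 : ℕ∞) ≤ ⊤)
  unfold pd
  rw [fderiv_clm_apply hd (by fun_prop), fderiv_clm_apply hd (by fun_prop)]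
  simpa using hs _ _

lemma pd_pdPow_comm {N : ℕ} (i j : Fin N) (k : ℕ) {f : Euc N → ℂ}
    (hf : ContDiff ℝ (⊤ : ℕ∞) f) : pd i (pdPow j k f) = pdPow j k (pd i f) := by
  induction k with
  | zero => rfl
  | succ k ih =>
    show pd i (pd j (pdPow j k f)) = pd j (pdPow j k (pd i f))
    rw [pd_comm i j (pdPow_smooth j k hf), ih]

lemma pdPow_pd {N : ℕ} (i : Fin N) (k : ℕ) (f : Euc N → ℂ) :
    pdPow i k (pd i f) = pd i (pdPow i k f) := by
  induction k with
  | zero => rfl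
  | succ k ih =>
    show pd i (pdPow i k (pd i f)) = pd i (pd i (pdPow i k f))
    rw [ih]

lemma foldr_add_notMem {N : ℕ} (L : List (Fin N)) (i : Fin N) (hi : i ∉ L)
    (α : Fin N → ℕ) (f : Euc N → ℂ) :
    L.foldr (fun j g => pdPow j ((α + Pi.single i 1 : Fin N → ℕ) j) g) f =
      L.foldr (fun j g => pdPow j (α j) g) f := by
  induction L with
  | nil => rfl
  | cons j L ih =>
    rw [List.mem_cons, not_or] at hi
    simp only [List.foldr_cons]
    rw [ih hi.2]
    simp [Pi.single_eq_of_ne (Ne.symm hi.1)]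

lemma foldr_pd {N : ℕ} (L : List (Fin N)) (i : Fin N) (hi : i ∈ L) (hL : L.Nodup)
    (α : Fin N → ℕ) {f : Euc N → ℂ} (hf : ContDiff ℝ (⊤ : ℕ∞) f) :
    pd i (L.foldr (fun j g => pdPow j (α j) g) f) =
      L.foldr (fun j g => pdPow j ((α + Pi.single i 1 : Fin N → ℕ) j) g) f := by
  induction L with
  | nil => simp at hi
  | cons j L ih =>
    rw [List.nodup_cons] at hL
    simp only [List.foldr_cons]
    by_cases hij : i = j
    · subst hij
      rw [foldr_add_notMem L i hL.1]
      simp [pdPow]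
    · have hiL : i ∈ L := by simpa [hij] using hi
      rw [pd_pdPow_comm i j _ (foldr_smooth L α hf), ih hiL hL.2]
      simp [Pi.single_eq_of_ne (Ne.symm hij)]

lemma pd_mderiv {N : ℕ} (i : Fin N) (α : Fin N → ℕ) {f : Euc N → ℂ}
    (hf : ContDiff ℝ (⊤ : ℕ∞) f) : pd i (mderiv α f) = mderiv (α + Pi.single i 1) f :=
  foldr_pd _ i (List.mem_finRange i) (List.nodup_finRange N) α hf

lemma mderiv_zero {N : ℕ} (f : Euc N → ℂ) : mderiv 0 f = f := by
  unfold mderiv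
  induction List.finRange N with
  | nil => rfl
  | cons j L ih => simp [pdPow]

/-- A family closed under partial derivatives is given by the multi-index derivatives. -/
lemma mderiv_family {N : ℕ} (G : (Fin N → ℕ) → Euc N → ℂ)
    (hG : ∀ i β, pd i (G β) = G (β + Pi.single i 1)) (α β : Fin N → ℕ) :
    mderiv α (G β) = G (β + α) := by
  have h1 : ∀ i k β, pdPow i k (G β) = G (β + Pi.single i k) := by
    intro i k β
    induction k with
    | zero => simp [pdPow]
    | succ k ih =>
      show pd i (pdPow i k (G β)) = _
      rw [ih, hG, add_assoc, ← Pi.single_add]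
  have h2 : ∀ L : List (Fin N), L.foldr (fun i g => pdPow i (α i) g) (G β) =
      G (β + (L.map (fun i => (Pi.single i (α i) : Fin N → ℕ))).sum) := by
    intro L
    induction L with
    | nil => simp
    | cons j L ih =>
      simp only [List.foldr_cons, List.map_cons, List.sum_cons]
      rw [ih, h1]
      congr 1
      abel
  unfold mderiv
  rw [h2]
  congr 2
  rw [← Fin.sum_univ_def, Finset.univ_sum_single]

lemma mderiv_mderiv {N : ℕ} (α β : Fin N → ℕ) {f : Euc N → ℂ}
    (hf : ContDiff ℝ (⊤ : ℕ∞) f) : mderiv α (mderiv β f) = mderiv (β + α) f :=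
  mderiv_family (fun β => mderiv β f) (fun i β => pd_mderiv i β hf) α β

lemma mderiv_sub {N : ℕ} (α : Fin N → ℕ) {f g : Euc N → ℂ}
    (hf : ContDiff ℝ (⊤ : ℕ∞) f) (hg : ContDiff ℝ (⊤ : ℕ∞) g) :
    mderiv α (f - g) = mderiv α f - mderiv α g := by
  have := mderiv_family (fun β => mderiv β f - mderiv β g) (fun i β => by
    rw [← pd_mderiv i β hf, ← pd_mderiv i β hg]
    funext x
    have h1 := (mderiv_smooth β hf).differentiable (by simp) x
    have h2 := (mderiv_smooth β hg).differentiable (by simp) x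
    simp only [pd, Pi.sub_apply]
    rw [fderiv_sub h1 h2]
    rfl) α 0
  simpa [mderiv_zero] using this

lemma hasFDerivAt_pd {N : ℕ} {f : Euc N → ℂ} (hf : ContDiff ℝ (⊤ : ℕ∞) f) (x : Euc N) :
    HasFDerivAt f (∑ i, (EuclideanSpace.proj i : Euc N →L[ℝ] ℝ).smulRight (pd i f x)) x := by
  have h := (hf.differentiable (by simp) x).hasFDerivAt
  suffices H : (∑ i, (EuclideanSpace.proj i : Euc N →L[ℝ] ℝ).smulRight (pd i f x)) =
      fderiv ℝ f x by rwa [H]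
  refine ContinuousLinearMap.ext fun v => ?_
  have hv : v = ∑ i, v i • (EuclideanSpace.single i (1:ℝ) : Euc N) := by
    ext j
    simp [Finset.sum_apply, Pi.single_apply]
  conv_rhs => rw [hv]
  simp [pd]

/-- The one-dimensional estimate. -/
lemma one_dim {a : ℝ} {g g' : ℝ → ℂ} (hg : ∀ t, HasDerivAt g (g' t) t) (hg' : Continuous g')
    {x : ℝ} (hx : x ∈ Set.Icc a (a + 1)) :
    ‖g x‖ₑ ≤ ∫⁻ t in Set.Icc a (a + 1), (‖g t‖ₑ + ‖g' t‖ₑ) := by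
  have hgc : Continuous g := continuous_iff_continuousAt.2 fun t => (hg t).continuousAt
  have key : ∀ y ∈ Set.Icc a (a + 1), ‖g x‖ₑ ≤ ‖g y‖ₑ + ∫⁻ t in Set.Icc a (a + 1), ‖g' t‖ₑ := by
    intro y hy
    have h1 : ∫ t in y..x, g' t = g x - g y :=
      intervalIntegral.integral_eq_sub_of_hasDerivAt (fun t _ => hg t)
        (hg'.intervalIntegrable _ _)
    have h2 : ‖g x - g y‖ₑ ≤ ∫⁻ t in Set.Icc a (a + 1), ‖g' t‖ₑ := by
      rw [← h1]
      have : ‖∫ t in y..x, g' t‖ₑ = ‖∫ t in Set.uIoc y x, g' t‖ₑ := by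
        rw [← ofReal_norm, ← ofReal_norm, intervalIntegral.norm_intervalIntegral_eq]
      rw [this]
      refine (enorm_integral_le_lintegral_enorm _).trans (lintegral_mono_set ?_)
      exact Set.uIoc_subset_uIcc.trans (Set.uIcc_subset_Icc hy hx)
    calc ‖g x‖ₑ = ‖g y + (g x - g y)‖ₑ := by congr 1; ring
      _ ≤ ‖g y‖ₑ + ‖g x - g y‖ₑ := enorm_add_le _ _
      _ ≤ _ := by gcongr
  have hv : volume (Set.Icc a (a + 1)) = 1 := by simp
  calc ‖g x‖ₑ = ∫⁻ y in Set.Icc a (a + 1), ‖g x‖ₑ := by rw [setLIntegral_const, hv, mul_one]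
    _ ≤ ∫⁻ y in Set.Icc a (a + 1), (‖g y‖ₑ + ∫⁻ t in Set.Icc a (a + 1), ‖g' t‖ₑ) :=
      setLIntegral_mono' measurableSet_Icc key
    _ = _ := by
      rw [lintegral_add_right _ measurable_const, lintegral_add_right _ (by fun_prop),
        setLIntegral_const, hv, mul_one]

lemma hasDerivAt_line {N : ℕ} {f : Euc N → ℂ} (hf : ContDiff ℝ (⊤ : ℕ∞) f) (i : Fin N)
    (x : Fin N → ℝ) (t : ℝ) :
    HasDerivAt (fun t => f (WithLp.toLp 2 (Function.update x i t)))
      (pd i f (WithLp.toLp 2 (Function.update x i t))) t := by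
  have h1 := hasDerivAt_update x i t
  have h2 := ((PiLp.continuousLinearEquiv 2 ℝ (fun _ : Fin N => ℝ)).symm.toContinuousLinearMap.hasFDerivAt
    (x := Function.update x i t)).comp_hasDerivAt t h1
  have h3 := (hf.differentiable (by simp) (WithLp.toLp 2 (Function.update x i t))).hasFDerivAt
  exact h3.comp_hasDerivAt t h2

def ind {N : ℕ} (S : Finset (Fin N)) : Fin N → ℕ := fun j => if j ∈ S then 1 else 0

lemma ind_insert {N : ℕ} (S : Finset (Fin N)) (i : Fin N) (hi : i ∉ S) :
    Pi.single i 1 + ind S = ind (insert i S) := by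
  funext j
  by_cases h : j = i
  · subst h; simp [ind, hi]
  · simp [ind, h]

lemma sup_lmarginal {N : ℕ} (a : Fin N → ℝ) (s : Finset (Fin N)) :
    ∀ (f : Euc N → ℂ), ContDiff ℝ (⊤ : ℕ∞) f → ∀ x : Fin N → ℝ,
      (∀ i, x i ∈ Set.Icc (a i) (a i + 1)) →
      ‖f (WithLp.toLp 2 x)‖ₑ ≤ ∑ S ∈ s.powerset,
        (∫⋯∫⁻_s, (fun y => ‖mderiv (ind S) f (WithLp.toLp 2 y)‖ₑ)
          ∂(fun i => (volume : Measure ℝ).restrict (Set.Icc (a i) (a i + 1)))) x := by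
  have hmeas : ∀ (f : Euc N → ℂ), ContDiff ℝ (⊤ : ℕ∞) f → ∀ α, Measurable
      (fun y : Fin N → ℝ => ‖mderiv α f (WithLp.toLp 2 y)‖ₑ) := by
    intro f hf α
    have h1 := (mderiv_smooth α hf).continuous
    have h2 : Continuous (fun y : Fin N → ℝ => (WithLp.toLp 2 y : Euc N)) :=
      PiLp.continuous_toLp 2 _
    exact (h1.comp h2).enorm.measurable
  induction s using Finset.induction with
  | empty =>
    intro f hf x hx
    have : ind (∅ : Finset (Fin N)) = 0 := by funext j; simp [ind]
    simp [this, mderiv_zero]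
  | insert i s hi ih =>
    intro f hf x hx
    have hpd := pd_smooth i hf
    have h1 := one_dim (a := a i) (hasDerivAt_line hf i x)
      (by
        have h2 : Continuous (fun y : Fin N → ℝ => (WithLp.toLp 2 y : Euc N)) :=
          PiLp.continuous_toLp 2 _
        exact hpd.continuous.comp (h2.comp (continuous_const.update i continuous_id))) (hx i)
    simp only [Function.update_eq_self] at h1
    refine h1.trans ?_
    rw [Finset.sum_powerset_insert hi, ← Finset.sum_add_distrib]
    have hup : ∀ t ∈ Set.Icc (a i) (a i + 1), ∀ j,
        Function.update x i t j ∈ Set.Icc (a j) (a j + 1) := by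
      intro t ht j
      by_cases h : j = i
      · subst h; simpa using ht
      · simpa [h] using hx j
    have hM : ∀ (f : Euc N → ℂ), ContDiff ℝ (⊤ : ℕ∞) f → ∀ α, Measurable (fun t : ℝ =>
        (∫⋯∫⁻_s, (fun y => ‖mderiv α f (WithLp.toLp 2 y)‖ₑ)
          ∂(fun i => (volume : Measure ℝ).restrict (Set.Icc (a i) (a i + 1))))
          (Function.update x i t)) := by
      intro f hf α
      exact ((hmeas f hf α).lmarginal _).comp (measurable_update x)
    calc _ ≤ ∫⁻ t in Set.Icc (a i) (a i + 1), ∑ S ∈ s.powerset,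
        ((∫⋯∫⁻_s, (fun y => ‖mderiv (ind S) f (WithLp.toLp 2 y)‖ₑ)
          ∂(fun i => (volume : Measure ℝ).restrict (Set.Icc (a i) (a i + 1))))
            (Function.update x i t) +
        (∫⋯∫⁻_s, (fun y => ‖mderiv (ind S) (pd i f) (WithLp.toLp 2 y)‖ₑ)
          ∂(fun i => (volume : Measure ℝ).restrict (Set.Icc (a i) (a i + 1))))
            (Function.update x i t)) := by
          refine setLIntegral_mono' measurableSet_Icc fun t ht => ?_
          rw [Finset.sum_add_distrib]
          exact add_le_add (ih f hf _ (hup t ht)) (ih _ hpd _ (hup t ht))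
      _ = _ := by
          rw [lintegral_finsetSum _ (fun S _ => by exact (hM f hf _).add (hM _ hpd _))]
          refine Finset.sum_congr rfl fun S hS => ?_
          have hiS : i ∉ S := fun h => hi (Finset.mem_powerset.1 hS h)
          rw [lintegral_add_left (hM f hf _), lmarginal_insert _ (hmeas f hf _) hi,
            lmarginal_insert _ (hmeas f hf _) hi]
          congr 1
          have : mderiv (ind S) (pd i f) = mderiv (ind (insert i S)) f := by
            have h0 : pd i f = mderiv (Pi.single i 1) f := by
              conv_lhs => rw [← mderiv_zero f]
              rw [pd_mderiv i 0 hf, zero_add]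
            rw [h0, mderiv_mderiv _ _ hf, ind_insert S i hiS]
          rw [this]

/-- A unit cube. -/
def cube {N : ℕ} (a : Fin N → ℝ) : Set (Euc N) :=
  {x | ∀ i, x i ∈ Set.Icc (a i) (a i + 1)}

lemma sup_cube {N : ℕ} (a : Fin N → ℝ) {f : Euc N → ℂ} (hf : ContDiff ℝ (⊤ : ℕ∞) f)
    {x : Euc N} (hx : x ∈ cube a) :
    ‖f x‖ₑ ≤ ∑ S : Finset (Fin N), ∫⁻ y in cube a, ‖mderiv (ind S) f y‖ₑ := by
  have h := sup_lmarginal a Finset.univ f hf (WithLp.ofLp x) hx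
  simp only [lmarginal_univ, Finset.powerset_univ] at h
  refine h.trans (le_of_eq (Finset.sum_congr rfl fun S _ => ?_))
  rw [← Measure.restrict_pi_pi, ← volume_pi]
  exact (PiLp.volume_preserving_toLp (Fin N)).setLIntegral_comp_preimage_emb
    (MeasurableEquiv.toLp 2 _).measurableEmbedding (fun y => ‖mderiv (ind S) f y‖ₑ) (cube a) ▸ by
      congr 2
      ext y
      simp only [cube, Set.mem_pi, Set.mem_preimage, Set.mem_ofPred_eq, Set.mem_univ, forall_const]

lemma cube_compact {N : ℕ} (a : Fin N → ℝ) : IsCompact (cube a) := by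
  have h : IsCompact (Set.pi Set.univ fun i => Set.Icc (a i) (a i + 1)) :=
    isCompact_univ_pi fun i => isCompact_Icc
  convert h.image (PiLp.continuous_toLp 2 (fun _ : Fin N => ℝ)) using 1
  ext x
  constructor
  · intro hx
    exact ⟨WithLp.ofLp x, fun i _ => hx i, rfl⟩
  · rintro ⟨y, hy, rfl⟩ i
    exact hy i trivial

lemma cube_volume {N : ℕ} (a : Fin N → ℝ) : volume (cube a) = 1 := by
  rw [← (PiLp.volume_preserving_toLp (Fin N)).measure_preimage
    (cube_compact a).measurableSet.nullMeasurableSet]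
  have : (WithLp.toLp 2 : (Fin N → ℝ) → Euc N) ⁻¹' (cube a) =
      Set.pi Set.univ fun i => Set.Icc (a i) (a i + 1) := by
    ext y; simp only [cube, Set.mem_pi, Set.mem_preimage, Set.mem_ofPred_eq, Set.mem_univ, forall_const]
  rw [this, volume_pi_pi]
  simp

lemma cube_nhds {N : ℕ} (x : Euc N) : cube (fun i => x i - 1 / 2) ∈ 𝓝 x := by
  have : ∀ i, ∀ᶠ y : Euc N in 𝓝 x, y i ∈ Set.Icc (x i - 1 / 2) (x i - 1 / 2 + 1) := by
    intro i
    have hc : Continuous fun y : Euc N => y i := by fun_prop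
    exact hc.continuousAt.eventually (Icc_mem_nhds (by linarith) (by linarith))
  exact eventually_all.2 this

/-- The combined weight. -/
def kw {N : ℕ} (ω : ℝ → ℝ) (m : ℕ) (n : ℤ) (p : ℝ) (α : Fin N → ℕ) (x : Euc N) : ℝ :=
  Real.exp (p * (-((n : ℝ) * ω ‖x‖)) + -((m : ℝ) * p * phiStar ω ((msize α : ℝ) / m)))

lemma kw_cont {N : ℕ} {ω : ℝ → ℝ} (hω : IsWeightFun ω) (m : ℕ) (n : ℤ) (p : ℝ)
    (α : Fin N → ℕ) : Continuous (kw (N := N) ω m n p α) := by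
  have h : Continuous fun x : Euc N => ω ‖x‖ :=
    hω.continuous.comp_continuous continuous_norm fun x => norm_nonneg x
  unfold kw
  exact Real.continuous_exp.comp
    ((continuous_const.mul (continuous_const.mul h).neg).add continuous_const)

/-- The `p`-th power of the norm. -/
def sn {N : ℕ} (ω : ℝ → ℝ) (m : ℕ) (n : ℤ) (p : ℝ) (f : Euc N → ℂ) : ℝ≥0∞ :=
  ∑' α : Fin N → ℕ, ∫⁻ x, ENNReal.ofReal (kw ω m n p α x) * ‖mderiv α f x‖ₑ ^ p

lemma rnorm_eq {N : ℕ} (ω : ℝ → ℝ) (m : ℕ) (n : ℤ) {p : ℝ} (hp : 1 ≤ p) (f : Euc N → ℂ) :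
    rnorm ω m n p f = (sn ω m n p f) ^ (1 / p) := by
  have hp0 : 0 < p := by linarith
  unfold rnorm sn
  congr 1
  refine tsum_congr fun α => ?_
  unfold wLp
  rw [eLpNorm_eq_lintegral_rpow_enorm_toReal (by simpa using hp0) ENNReal.ofReal_ne_top,
    ENNReal.toReal_ofReal hp0.le, ← ENNReal.rpow_mul, one_div_mul_cancel hp0.ne',
    ENNReal.rpow_one, ← lintegral_mul_const' _ _ ENNReal.ofReal_ne_top]
  refine lintegral_congr fun x => ?_
  rw [enorm_mul, ENNReal.mul_rpow_of_nonneg _ _ hp0.le, enorm_norm, mul_right_comm]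
  congr 1
  unfold kw
  rw [Real.enorm_eq_ofReal (Real.exp_pos _).le, ENNReal.ofReal_rpow_of_pos (Real.exp_pos _),
    ← Real.exp_mul, ← ENNReal.ofReal_mul (Real.exp_pos _).le, ← Real.exp_add]
  ring_nf

lemma lintegral_rpow_le_cube {N : ℕ} (a : Fin N → ℝ) {p : ℝ} (hp : 1 ≤ p) {g : Euc N → ℂ}
    (hg : Continuous g) : ∫⁻ y in cube a, ‖g y‖ₑ ≤ (∫⁻ y in cube a, ‖g y‖ₑ ^ p) ^ (1 / p) := by
  have hp0 : 0 < p := by linarith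
  have : IsProbabilityMeasure (volume.restrict (cube a)) :=
    ⟨by rw [Measure.restrict_apply_univ, cube_volume]⟩
  have h := eLpNorm_le_eLpNorm_of_exponent_le (μ := volume.restrict (cube a)) (f := g)
    (p := 1) (q := ENNReal.ofReal p) (by simpa using hp) hg.aestronglyMeasurable
  rw [eLpNorm_one_eq_lintegral_enorm,
    eLpNorm_eq_lintegral_rpow_enorm_toReal (by simpa using hp0) ENNReal.ofReal_ne_top,
    ENNReal.toReal_ofReal hp0.le] at h
  exact h

lemma cube_est {N : ℕ} {ω : ℝ → ℝ} (hω : IsWeightFun ω) (m : ℕ) (n : ℤ) {p : ℝ} (hp : 1 ≤ p)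
    (a : Fin N → ℝ) (α : Fin N → ℕ) : ∃ C : ℝ≥0∞, C ≠ ⊤ ∧ ∀ g : Euc N → ℂ,
      ContDiff ℝ (⊤ : ℕ∞) g →
      ∫⁻ y in cube a, ‖mderiv α g y‖ₑ ≤ C * rnorm ω m n p g := by
  have hp0 : 0 < p := by linarith
  obtain ⟨c, hc, hck⟩ : ∃ c : ℝ, 0 < c ∧ ∀ x ∈ cube a, c ≤ kw ω m n p α x := by
    rcases (cube a).eq_empty_or_nonempty with h | h
    · exact ⟨1, one_pos, by simp [h]⟩
    · obtain ⟨z, hz, hmin⟩ := (cube_compact a).exists_isMinOn h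
        (kw_cont hω m n p α).continuousOn
      exact ⟨kw ω m n p α z, Real.exp_pos _, fun x hx => hmin hx⟩
  have hc' : ENNReal.ofReal c ≠ 0 := by simpa using hc
  refine ⟨((ENNReal.ofReal c)⁻¹) ^ (1 / p), ?_, fun g hg => ?_⟩
  · exact ENNReal.rpow_ne_top_of_nonneg (by positivity) (by simpa using hc)
  refine (lintegral_rpow_le_cube a hp (mderiv_smooth α hg).continuous).trans ?_
  rw [rnorm_eq ω m n hp, ← ENNReal.mul_rpow_of_nonneg _ _ (by positivity)]
  refine ENNReal.rpow_le_rpow ?_ (by positivity)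
  rw [mul_comm, ← div_eq_mul_inv, ENNReal.le_div_iff_mul_le (Or.inl hc') (Or.inl ENNReal.ofReal_ne_top),
    mul_comm]
  calc ENNReal.ofReal c * ∫⁻ y in cube a, ‖mderiv α g y‖ₑ ^ p
      = ∫⁻ y in cube a, ENNReal.ofReal c * ‖mderiv α g y‖ₑ ^ p :=
        (lintegral_const_mul' _ _ ENNReal.ofReal_ne_top).symm
    _ ≤ ∫⁻ y in cube a, ENNReal.ofReal (kw ω m n p α y) * ‖mderiv α g y‖ₑ ^ p := by
        refine setLIntegral_mono' (cube_compact a).measurableSet fun y hy => ?_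
        gcongr
        exact hck y hy
    _ ≤ ∫⁻ y, ENNReal.ofReal (kw ω m n p α y) * ‖mderiv α g y‖ₑ ^ p := setLIntegral_le_lintegral _ _
    _ ≤ _ := ENNReal.le_tsum (f := fun α => ∫⁻ y, ENNReal.ofReal (kw ω m n p α y) *
        ‖mderiv α g y‖ₑ ^ p) α

lemma local_est {N : ℕ} {ω : ℝ → ℝ} (hω : IsWeightFun ω) (m : ℕ) (n : ℤ) {p : ℝ} (hp : 1 ≤ p)
    (a : Fin N → ℝ) (β : Fin N → ℕ) : ∃ C : ℝ, 0 < C ∧ ∀ g : Euc N → ℂ,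
      ContDiff ℝ (⊤ : ℕ∞) g → ∀ x ∈ cube a,
      ‖mderiv β g x‖ₑ ≤ ENNReal.ofReal C * rnorm ω m n p g := by
  choose C hC h using fun S : Finset (Fin N) => cube_est hω m n hp a (β + ind S)
  have hne : (∑ S, C S) + 1 ≠ ⊤ := by
    simp [ENNReal.sum_eq_top, hC]
  refine ⟨((∑ S, C S) + 1).toReal, ENNReal.toReal_pos (by simp) hne, fun g hg x hx => ?_⟩
  rw [ENNReal.ofReal_toReal hne]
  refine (sup_cube a (mderiv_smooth β hg) hx).trans ?_
  calc ∑ S, ∫⁻ y in cube a, ‖mderiv (ind S) (mderiv β g) y‖ₑ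
      ≤ ∑ S, C S * rnorm ω m n p g := by
        refine Finset.sum_le_sum fun S _ => ?_
        rw [mderiv_mderiv _ _ hg]
        exact h S g hg
    _ = (∑ S, C S) * rnorm ω m n p g := by rw [Finset.sum_mul]
    _ ≤ _ := by gcongr; exact le_self_add

/-- Fatou's lemma for `sn`. -/
lemma sn_fatou {N : ℕ} {ω : ℝ → ℝ} (hω : IsWeightFun ω) (m : ℕ) (n : ℤ) {p : ℝ} (hp : 1 ≤ p)
    (G : ℕ → Euc N → ℂ) (hG : ∀ l, ContDiff ℝ (⊤ : ℕ∞) (G l)) (g : Euc N → ℂ)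
    (hlim : ∀ α x, Tendsto (fun l => mderiv α (G l) x) atTop (𝓝 (mderiv α g x))) {B : ℝ≥0∞}
    (hB : ∀ᶠ l in atTop, sn ω m n p (G l) ≤ B) : sn ω m n p g ≤ B := by
  have hp0 : 0 < p := by linarith
  have h1 : ∀ α, ∫⁻ x, ENNReal.ofReal (kw ω m n p α x) * ‖mderiv α g x‖ₑ ^ p ≤
      liminf (fun l => ∫⁻ x, ENNReal.ofReal (kw ω m n p α x) * ‖mderiv α (G l) x‖ₑ ^ p) atTop := by
    intro α
    calc _ = ∫⁻ x, liminf (fun l => ENNReal.ofReal (kw ω m n p α x) *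
            ‖mderiv α (G l) x‖ₑ ^ p) atTop := by
          refine lintegral_congr fun x => (Tendsto.liminf_eq ?_).symm
          refine ENNReal.Tendsto.const_mul ?_ (Or.inr ENNReal.ofReal_ne_top)
          exact ((ENNReal.continuous_rpow_const.tendsto _).comp (hlim α x).enorm)
      _ ≤ _ := by
          refine lintegral_liminf_le fun l => ?_
          have hk := (kw_cont (N := N) hω m n p α).measurable.ennreal_ofReal
          have hm := (mderiv_smooth α (hG l)).continuous.enorm.measurable
          exact hk.mul (hm.pow_const p)
  unfold sn
  calc _ ≤ ∑' α : Fin N → ℕ, liminf (fun l => ∫⁻ x, ENNReal.ofReal (kw ω m n p α x) *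
        ‖mderiv α (G l) x‖ₑ ^ p) atTop := ENNReal.tsum_le_tsum h1
    _ ≤ liminf (fun l => sn ω m n p (G l)) atTop := by
        unfold sn
        simp only [← lintegral_count]
        exact lintegral_liminf_le fun l => measurable_of_countable _
    _ ≤ B := by
        refine (liminf_le_liminf hB).trans ?_
        simp

lemma sn_triangle {N : ℕ} {ω : ℝ → ℝ} (hω : IsWeightFun ω) (m : ℕ) (n : ℤ) {p : ℝ} (hp : 1 ≤ p)
    {f g : Euc N → ℂ} (hf : ContDiff ℝ (⊤ : ℕ∞) f) (hg : ContDiff ℝ (⊤ : ℕ∞) g) :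
    sn ω m n p f ≤ 2 ^ (p - 1) * (sn ω m n p g + sn ω m n p (g - f)) := by
  unfold sn
  rw [← ENNReal.tsum_add, ← ENNReal.tsum_mul_left]
  refine ENNReal.tsum_le_tsum fun α => ?_
  have hk := (kw_cont (N := N) hω m n p α).measurable.ennreal_ofReal
  have hm := (mderiv_smooth α hg).continuous.enorm.measurable
  have hkm : Measurable fun x => ENNReal.ofReal (kw ω m n p α x) * ‖mderiv α g x‖ₑ ^ p :=
    hk.mul (hm.pow_const p)
  rw [← lintegral_add_left hkm, ← lintegral_const_mul' _ _
    (ENNReal.rpow_ne_top_of_nonneg (by linarith) (by simp))]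
  refine lintegral_mono fun x => ?_
  rw [mderiv_sub α hg hf]
  calc _ ≤ ENNReal.ofReal (kw ω m n p α x) *
        (‖mderiv α g x‖ₑ + ‖(mderiv α g - mderiv α f) x‖ₑ) ^ p := by
        gcongr
        calc ‖mderiv α f x‖ₑ = ‖mderiv α g x - (mderiv α g - mderiv α f) x‖ₑ := by simp
          _ ≤ _ := enorm_sub_le
    _ ≤ ENNReal.ofReal (kw ω m n p α x) * (2 ^ (p - 1) *
        (‖mderiv α g x‖ₑ ^ p + ‖(mderiv α g - mderiv α f) x‖ₑ ^ p)) := by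
        gcongr
        exact ENNReal.rpow_add_le_mul_rpow_add_rpow _ _ hp
    _ = _ := by ring

/-- A family of locally uniform limits of derivatives is smooth. -/
lemma limit_family {N : ℕ} (F : ℕ → Euc N → ℂ) (hF : ∀ j, ContDiff ℝ (⊤ : ℕ∞) (F j))
    (G : (Fin N → ℕ) → Euc N → ℂ)
    (hG : ∀ α, TendstoLocallyUniformlyOn (fun j => mderiv α (F j)) (G α) atTop Set.univ) :
    ContDiff ℝ (⊤ : ℕ∞) (G 0) ∧ ∀ α, mderiv α (G 0) = G α := by
  have hd : ∀ α x, HasFDerivAt (G α)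
      (∑ i, (EuclideanSpace.proj i : Euc N →L[ℝ] ℝ).smulRight (G (α + Pi.single i 1) x)) x := by
    intro α x
    have hsum : ∀ s : Finset (Fin N), TendstoLocallyUniformlyOn (fun j x => ∑ i ∈ s,
        (EuclideanSpace.proj i : Euc N →L[ℝ] ℝ).smulRight (mderiv (α + Pi.single i 1) (F j) x))
        (fun x => ∑ i ∈ s,
        (EuclideanSpace.proj i : Euc N →L[ℝ] ℝ).smulRight (G (α + Pi.single i 1) x))
        atTop Set.univ := by
        intro s
        induction s using Finset.induction with
        | empty =>
          simp only [Finset.sum_empty]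
          intro u hu x _
          exact ⟨Set.univ, univ_mem, Eventually.of_forall fun j y _ => refl_mem_uniformity hu⟩
        | insert i s hi ih =>
          simp only [Finset.sum_insert hi]
          refine TendstoLocallyUniformlyOn.add (F := fun j x =>
            (EuclideanSpace.proj i : Euc N →L[ℝ] ℝ).smulRight
              (mderiv (α + Pi.single i 1) (F j) x))
            (f := fun x => (EuclideanSpace.proj i : Euc N →L[ℝ] ℝ).smulRight
              (G (α + Pi.single i 1) x)) ?_ ih
          have huc : UniformContinuous fun c : ℂ =>
              (EuclideanSpace.proj i : Euc N →L[ℝ] ℝ).smulRight c :=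
            (ContinuousLinearMap.smulRightL ℝ (Euc N) ℂ
              (EuclideanSpace.proj i : Euc N →L[ℝ] ℝ)).uniformContinuous
          exact huc.comp_tendstoLocallyUniformlyOn (hG (α + Pi.single i 1))
    have hder : ∀ j, ∀ x ∈ (Set.univ : Set (Euc N)), HasFDerivAt (mderiv α (F j)) (∑ i,
        (EuclideanSpace.proj i : Euc N →L[ℝ] ℝ).smulRight
          (mderiv (α + Pi.single i 1) (F j) x)) x := by
      intro j x _
      have := hasFDerivAt_pd (mderiv_smooth α (hF j)) x
      simpa only [pd_mderiv _ _ (hF j)] using this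
    exact hasFDerivAt_of_tendstoLocallyUniformlyOn isOpen_univ (hsum Finset.univ) hder
      (fun x hx => (hG α).tendsto_at hx) (Set.mem_univ x)
  have hpd : ∀ i α, pd i (G α) = G (α + Pi.single i 1) := by
    intro i α
    funext x
    unfold pd
    rw [(hd α x).fderiv]
    simp
  refine ⟨?_, fun α => by simpa using mderiv_family G hpd α 0⟩
  have hk : ∀ k : ℕ, ∀ α, ContDiff ℝ k (G α) := by
    intro k
    induction k with
    | zero =>
      intro α
      exact contDiff_zero.2 (continuous_iff_continuousAt.2 fun x => (hd α x).continuousAt)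
    | succ k ih =>
      intro α
      rw [Nat.cast_succ, contDiff_succ_iff_fderiv]
      refine ⟨fun x => (hd α x).differentiableAt, by simp, ?_⟩
      have : fderiv ℝ (G α) = fun x => ∑ i,
        (EuclideanSpace.proj i : Euc N →L[ℝ] ℝ).smulRight (G (α + Pi.single i 1) x) :=
        funext fun x => (hd α x).fderiv
      rw [this]
      refine ContDiff.sum fun i _ => ?_
      exact contDiff_const.smulRight (ih _)
  exact contDiff_infty.2 fun k => hk k 0
/-- `(O^m_{n,ω,p}(ℝ^N), r_{m,n,p})` is a Banach space: every `r_{m,n,p}`-Cauchy sequence of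
smooth functions with finite norm converges in norm to a smooth function with finite norm. -/
theorem Omnp_complete
    {N : ℕ} (ω : ℝ → ℝ) (hω : IsWeightFun ω)
    (m : ℕ) (hm : 0 < m) (n : ℤ) (p : ℝ) (hp : 1 ≤ p)
    (F : ℕ → Euc N → ℂ)
    (hsmooth : ∀ j, ContDiff ℝ (⊤ : ℕ∞) (F j))
    (hfin : ∀ j, rnorm ω m n p (F j) < ⊤)
    (hcauchy : ∀ ε : ℝ, 0 < ε → ∃ J : ℕ, ∀ j ≥ J, ∀ l ≥ J,
      rnorm ω m n p (F j - F l) < ENNReal.ofReal ε) :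
    ∃ f : Euc N → ℂ, ContDiff ℝ (⊤ : ℕ∞) f ∧ rnorm ω m n p f < ⊤ ∧
      Tendsto (fun j => rnorm ω m n p (F j - f)) atTop (nhds 0) := by
  have hp0 : 0 < p := by linarith
  -- uniform Cauchy estimate on cubes
  have hC : ∀ (a : Fin N → ℝ) (α : Fin N → ℕ) (ε : ℝ), 0 < ε → ∃ J : ℕ, ∀ j ≥ J, ∀ l ≥ J,
      ∀ x ∈ cube a, ‖mderiv α (F j) x - mderiv α (F l) x‖ ≤ ε := by
    intro a α ε hε
    obtain ⟨C, hC0, hC⟩ := local_est hω m n hp a α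
    obtain ⟨J, hJ⟩ := hcauchy (ε / C) (by positivity)
    refine ⟨J, fun j hj l hl x hx => ?_⟩
    have h1 := hC (F j - F l) ((hsmooth j).sub (hsmooth l)) x hx
    have h2 : ‖mderiv α (F j - F l) x‖ₑ ≤ ENNReal.ofReal ε := by
      refine h1.trans ?_
      calc _ ≤ ENNReal.ofReal C * ENNReal.ofReal (ε / C) := by
            gcongr
            exact (hJ j hj l hl).le
        _ = ENNReal.ofReal ε := by
            rw [← ENNReal.ofReal_mul hC0.le, mul_div_cancel₀ _ hC0.ne']
    rw [mderiv_sub α (hsmooth j) (hsmooth l), ← ofReal_norm,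
      ENNReal.ofReal_le_ofReal_iff hε.le] at h2
    exact h2
  have hlim : ∀ α x, ∃ y, Tendsto (fun j => mderiv α (F j) x) atTop (𝓝 y) := by
    intro α x
    refine cauchySeq_tendsto_of_complete (Metric.cauchySeq_iff'.2 fun ε hε => ?_)
    obtain ⟨J, hJ⟩ := hC (fun i => x i - 1 / 2) α (ε / 2) (by positivity)
    refine ⟨J, fun j hj => ?_⟩
    rw [dist_eq_norm]
    exact (hJ j hj J le_rfl x (mem_of_mem_nhds (cube_nhds x))).trans_lt (by linarith)
  choose G hG using hlim
  have hU : ∀ α, TendstoLocallyUniformlyOn (fun j => mderiv α (F j)) (G α) atTop Set.univ := by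
    intro α
    rw [Metric.tendstoLocallyUniformlyOn_iff]
    intro ε hε x _
    refine ⟨cube (fun i => x i - 1 / 2), mem_nhdsWithin_of_mem_nhds (cube_nhds x), ?_⟩
    obtain ⟨J, hJ⟩ := hC (fun i => x i - 1 / 2) α (ε / 2) (by positivity)
    filter_upwards [eventually_ge_atTop J] with j hj y hy
    have h1 : Tendsto (fun l => ‖mderiv α (F l) y - mderiv α (F j) y‖) atTop
        (𝓝 ‖G α y - mderiv α (F j) y‖) := ((hG α y).sub_const _).norm
    have h2 : ‖G α y - mderiv α (F j) y‖ ≤ ε / 2 :=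
      le_of_tendsto h1 (by
        filter_upwards [eventually_ge_atTop J] with l hl
        exact hJ l hl j hj y hy)
    rw [dist_eq_norm]
    linarith
  obtain ⟨hsm, hmd⟩ := limit_family F hsmooth G hU
  have hest : ∀ ε : ℝ, 0 < ε → ∃ J : ℕ, ∀ j ≥ J,
      rnorm ω m n p (F j - G 0) ≤ ENNReal.ofReal ε := by
    intro ε hε
    obtain ⟨J, hJ⟩ := hcauchy ε hε
    refine ⟨J, fun j hj => ?_⟩
    have h := sn_fatou hω m n hp (fun l => F j - F l) (fun l => (hsmooth j).sub (hsmooth l))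
      (F j - G 0) (B := ENNReal.ofReal ε ^ p) (fun α x => by
        simp only [mderiv_sub α (hsmooth j) (hsmooth _), mderiv_sub α (hsmooth j) hsm, hmd]
        exact (hG α x).const_sub _) (by
        filter_upwards [eventually_ge_atTop J] with l hl
        have := (hJ j hj l hl).le
        rw [rnorm_eq ω m n hp] at this
        have h2 := ENNReal.rpow_le_rpow this hp0.le
        rwa [← ENNReal.rpow_mul, one_div_mul_cancel hp0.ne', ENNReal.rpow_one] at h2)
    rw [rnorm_eq ω m n hp]
    have h2 := ENNReal.rpow_le_rpow h (z := 1 / p) (by positivity)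
    rwa [← ENNReal.rpow_mul, mul_one_div_cancel hp0.ne', ENNReal.rpow_one] at h2
  have hsn : ∀ g : Euc N → ℂ, rnorm ω m n p g < ⊤ ↔ sn ω m n p g < ⊤ := by
    intro g
    rw [rnorm_eq ω m n hp, ENNReal.rpow_lt_top_iff_of_pos (by positivity)]
  refine ⟨G 0, hsm, ?_, ?_⟩
  · obtain ⟨J, hJ⟩ := hest 1 one_pos
    have h1 := (hsn _).1 ((hJ J le_rfl).trans_lt ENNReal.ofReal_lt_top)
    have h2 := (hsn _).1 (hfin J)
    rw [hsn]
    refine (sn_triangle hω m n hp hsm (hsmooth J)).trans_lt ?_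
    exact ENNReal.mul_lt_top
      (ENNReal.rpow_ne_top_of_nonneg (by linarith) (by simp)).lt_top
      (ENNReal.add_lt_top.2 ⟨h2, h1⟩)
  · rw [ENNReal.tendsto_atTop_zero]
    intro ε hε
    rcases eq_or_ne ε ⊤ with rfl | hne
    · exact ⟨0, fun _ _ => le_top⟩
    · obtain ⟨J, hJ⟩ := hest ε.toReal (ENNReal.toReal_pos hε.ne' hne)
      exact ⟨J, fun j hj => (hJ j hj).trans (ENNReal.ofReal_toReal hne).le⟩
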